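/- arXiv:2001.06027 — 5 statements merged into one kernel-verified Lean document; each statement's English description precedes it below -/
import Mathlib

section
/- For every nuisance tuple N' = (g'_a, g'_a⋆, q'_a, q'_a⋆, Qbar'_a, Qbar'_a⋆), the total effect decomposes exactly into the interventional direct, indirect, and covariant mediator effects: Ψ(N') = Ψ_A(N') + Ψ_{M1}(N') + Ψ_{M2}(N') + Ψ_{M1,M2}(N'). -/
open MeasureTheory

noncomputable section

/-- A nuisance tuple `(g_a, g_a⋆, q_a, q_a⋆, Qbar_a, Qbar_a⋆)`: propensity scores,
joint mediator densities, and outcome regressions. -/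
structure Nuisance (C M1 M2 : Type*) [MeasurableSpace C] [MeasurableSpace M1]
    [MeasurableSpace M2] (μ1 : Measure M1) (μ2 : Measure M2) where
  ga : C → ℝ
  gas : C → ℝ
  qa : M1 → M2 → C → ℝ
  qas : M1 → M2 → C → ℝ
  Qa : M1 → M2 → C → ℝ
  Qas : M1 → M2 → C → ℝ
  meas_ga : Measurable ga
  meas_gas : Measurable gas
  meas_qa : Measurable (fun x : M1 × M2 × C => qa x.1 x.2.1 x.2.2)
  meas_qas : Measurable (fun x : M1 × M2 × C => qas x.1 x.2.1 x.2.2)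
  meas_Qa : Measurable (fun x : M1 × M2 × C => Qa x.1 x.2.1 x.2.2)
  meas_Qas : Measurable (fun x : M1 × M2 × C => Qas x.1 x.2.1 x.2.2)
  ga_pos : ∀ c, 0 < ga c
  ga_lt_one : ∀ c, ga c < 1
  gas_pos : ∀ c, 0 < gas c
  gas_lt_one : ∀ c, gas c < 1
  g_sum : ∀ c, ga c + gas c = 1
  qa_pos : ∀ m1 m2 c, 0 < qa m1 m2 c
  qas_pos : ∀ m1 m2 c, 0 < qas m1 m2 c
  qa_norm : ∀ c, (∫ m1, (∫ m2, qa m1 m2 c ∂μ2) ∂μ1) = 1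
  qas_norm : ∀ c, (∫ m1, (∫ m2, qas m1 m2 c ∂μ2) ∂μ1) = 1
  Qa_nonneg : ∀ m1 m2 c, 0 ≤ Qa m1 m2 c
  Qa_le_one : ∀ m1 m2 c, Qa m1 m2 c ≤ 1
  Qas_nonneg : ∀ m1 m2 c, 0 ≤ Qas m1 m2 c
  Qas_le_one : ∀ m1 m2 c, Qas m1 m2 c ≤ 1

variable {C M1 M2 : Type*} [MeasurableSpace C] [MeasurableSpace M1] [MeasurableSpace M2]
  {μ1 : Measure M1} {μ2 : Measure M2}

/-- Marginal mediator density `q_{a,M1}`. -/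
def qaM1 (N : Nuisance C M1 M2 μ1 μ2) (m1 : M1) (c : C) : ℝ := ∫ m2, N.qa m1 m2 c ∂μ2

/-- Marginal mediator density `q_{a⋆,M1}`. -/
def qasM1 (N : Nuisance C M1 M2 μ1 μ2) (m1 : M1) (c : C) : ℝ := ∫ m2, N.qas m1 m2 c ∂μ2

/-- Marginal mediator density `q_{a,M2}`. -/
def qaM2 (N : Nuisance C M1 M2 μ1 μ2) (m2 : M2) (c : C) : ℝ := ∫ m1, N.qa m1 m2 c ∂μ1

/-- Marginal mediator density `q_{a⋆,M2}`. -/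
def qasM2 (N : Nuisance C M1 M2 μ1 μ2) (m2 : M2) (c : C) : ℝ := ∫ m1, N.qas m1 m2 c ∂μ1

/-- Total effect `Ψ`. -/
def Psi (μC : Measure C) (N : Nuisance C M1 M2 μ1 μ2) : ℝ :=
  ∫ c, (∫ m1, (∫ m2,
    (N.Qa m1 m2 c * N.qa m1 m2 c - N.Qas m1 m2 c * N.qas m1 m2 c) ∂μ2) ∂μ1) ∂μC

/-- Interventional direct effect `Ψ_A`. -/
def PsiA (μC : Measure C) (N : Nuisance C M1 M2 μ1 μ2) : ℝ :=
  ∫ c, (∫ m1, (∫ m2,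
    ((N.Qa m1 m2 c - N.Qas m1 m2 c) * N.qas m1 m2 c) ∂μ2) ∂μ1) ∂μC

/-- Interventional indirect effect through `M1`. -/
def PsiM1 (μC : Measure C) (N : Nuisance C M1 M2 μ1 μ2) : ℝ :=
  ∫ c, (∫ m1, (∫ m2,
    (N.Qa m1 m2 c * ((qaM1 N m1 c - qasM1 N m1 c) * qasM2 N m2 c)) ∂μ2) ∂μ1) ∂μC

/-- Interventional indirect effect through `M2`. -/
def PsiM2 (μC : Measure C) (N : Nuisance C M1 M2 μ1 μ2) : ℝ :=
  ∫ c, (∫ m1, (∫ m2,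
    (N.Qa m1 m2 c * (qaM1 N m1 c * (qaM2 N m2 c - qasM2 N m2 c))) ∂μ2) ∂μ1) ∂μC

/-- Covariant mediator effect `Ψ_{M1,M2}`. -/
def PsiCov (μC : Measure C) (N : Nuisance C M1 M2 μ1 μ2) : ℝ :=
  ∫ c, (∫ m1, (∫ m2,
    (N.Qa m1 m2 c * (N.qa m1 m2 c - qaM1 N m1 c * qaM2 N m2 c
      - (N.qas m1 m2 c - qasM1 N m1 c * qasM2 N m2 c))) ∂μ2) ∂μ1) ∂μC

/-- `E_P[D]` for a function `D(a0, m1, m2, c, y)` affine in `y`: the mean of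
`D(A, M1, M2, C, Y)` under the observed-data law generated by the tuple `N`
(`a0 = true` encodes `a`, `a0 = false` encodes `a⋆`). -/
def EP (μC : Measure C) (N : Nuisance C M1 M2 μ1 μ2)
    (D : Bool → M1 → M2 → C → ℝ → ℝ) : ℝ :=
  ∫ c,
    (N.ga c * (∫ m1, (∫ m2, N.qa m1 m2 c * D true m1 m2 c (N.Qa m1 m2 c) ∂μ2) ∂μ1)
      + N.gas c * (∫ m1, (∫ m2, N.qas m1 m2 c * D false m1 m2 c (N.Qas m1 m2 c) ∂μ2) ∂μ1)) ∂μC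

/-- `Q̃_a(c) = ∬ Qbar_a q_a`. -/
def QtA (N : Nuisance C M1 M2 μ1 μ2) (c : C) : ℝ :=
  ∫ m1, (∫ m2, N.Qa m1 m2 c * N.qa m1 m2 c ∂μ2) ∂μ1

/-- `Q̃_a⋆(c) = ∬ Qbar_a⋆ q_a⋆` (this is also `Q̃_{a⋆,⋆}`). -/
def QtAs (N : Nuisance C M1 M2 μ1 μ2) (c : C) : ℝ :=
  ∫ m1, (∫ m2, N.Qas m1 m2 c * N.qas m1 m2 c ∂μ2) ∂μ1

/-- `Q̃_{a,⋆}(c) = ∬ Qbar_a q_a⋆`. -/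
def QtAstar (N : Nuisance C M1 M2 μ1 μ2) (c : C) : ℝ :=
  ∫ m1, (∫ m2, N.Qa m1 m2 c * N.qas m1 m2 c ∂μ2) ∂μ1

/-- `Q̃_{a,M2⋆}(m1,c) = ∫ Qbar_a q_{a⋆,M2} dμ2`. -/
def QtM2s (N : Nuisance C M1 M2 μ1 μ2) (m1 : M1) (c : C) : ℝ :=
  ∫ m2, N.Qa m1 m2 c * qasM2 N m2 c ∂μ2

/-- `Q̃_{a,M2}(m1,c) = ∫ Qbar_a q_{a,M2} dμ2`. -/
def QtM2 (N : Nuisance C M1 M2 μ1 μ2) (m1 : M1) (c : C) : ℝ :=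
  ∫ m2, N.Qa m1 m2 c * qaM2 N m2 c ∂μ2

/-- `Q̃_{a,M1}(m2,c) = ∫ Qbar_a q_{a,M1} dμ1`. -/
def QtM1 (N : Nuisance C M1 M2 μ1 μ2) (m2 : M2) (c : C) : ℝ :=
  ∫ m1, N.Qa m1 m2 c * qaM1 N m1 c ∂μ1

/-- `Q̃_{a,M1⋆}(m2,c) = ∫ Qbar_a q_{a⋆,M1} dμ1`. -/
def QtM1s (N : Nuisance C M1 M2 μ1 μ2) (m2 : M2) (c : C) : ℝ :=
  ∫ m1, N.Qa m1 m2 c * qasM1 N m1 c ∂μ1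

/-- `Q̃_{a,M1×M2⋆}(c)`. -/
def QtM1xM2s (N : Nuisance C M1 M2 μ1 μ2) (c : C) : ℝ :=
  ∫ m1, (∫ m2, N.Qa m1 m2 c * (qaM1 N m1 c * qasM2 N m2 c) ∂μ2) ∂μ1

/-- `Q̃_{a,M1⋆×M2⋆}(c)`. -/
def QtM1sxM2s (N : Nuisance C M1 M2 μ1 μ2) (c : C) : ℝ :=
  ∫ m1, (∫ m2, N.Qa m1 m2 c * (qasM1 N m1 c * qasM2 N m2 c) ∂μ2) ∂μ1

/-- `Q̃_{a,M1×M2}(c)`. -/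
def QtM1xM2 (N : Nuisance C M1 M2 μ1 μ2) (c : C) : ℝ :=
  ∫ m1, (∫ m2, N.Qa m1 m2 c * (qaM1 N m1 c * qaM2 N m2 c) ∂μ2) ∂μ1

/-- Uncentered efficient influence function of the total effect. -/
def D0 (N' : Nuisance C M1 M2 μ1 μ2) : Bool → M1 → M2 → C → ℝ → ℝ :=
  fun a0 _ _ c y =>
    (if a0 then (N'.ga c)⁻¹ * (y - QtA N' c)
     else -((N'.gas c)⁻¹ * (y - QtAs N' c)))
    + (QtA N' c - QtAs N' c)

/-- Uncentered efficient influence function of the interventional direct effect. -/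
def D0A (N' : Nuisance C M1 M2 μ1 μ2) : Bool → M1 → M2 → C → ℝ → ℝ :=
  fun a0 m1 m2 c y =>
    (if a0 then
      (N'.ga c)⁻¹ * (N'.qas m1 m2 c / N'.qa m1 m2 c) * (y - N'.Qa m1 m2 c)
     else
      -((N'.gas c)⁻¹ * (y - N'.Qas m1 m2 c))
        + (N'.gas c)⁻¹ * (N'.Qa m1 m2 c - N'.Qas m1 m2 c - (QtAstar N' c - QtAs N' c)))
    + (QtAstar N' c - QtAs N' c)

/-- Uncentered efficient influence function of the interventional indirect effect
through `M1`. -/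
def D0M1 (N' : Nuisance C M1 M2 μ1 μ2) : Bool → M1 → M2 → C → ℝ → ℝ :=
  fun a0 m1 m2 c y =>
    (if a0 then
      (N'.ga c)⁻¹ * ((qaM1 N' m1 c - qasM1 N' m1 c) * qasM2 N' m2 c / N'.qa m1 m2 c)
          * (y - N'.Qa m1 m2 c)
        + (N'.ga c)⁻¹ * (QtM2s N' m1 c - QtM1xM2s N' c)
     else
      -((N'.gas c)⁻¹ * (QtM2s N' m1 c - QtM1sxM2s N' c))
        + (N'.gas c)⁻¹ * (QtM1 N' m2 c - QtM1s N' m2 c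
            - (QtM1xM2s N' c - QtM1sxM2s N' c)))
    + (QtM1xM2s N' c - QtM1sxM2s N' c)

/-- Uncentered efficient influence function of the interventional indirect effect
through `M2`. -/
def D0M2 (N' : Nuisance C M1 M2 μ1 μ2) : Bool → M1 → M2 → C → ℝ → ℝ :=
  fun a0 m1 m2 c y =>
    (if a0 then
      (N'.ga c)⁻¹ * ((qaM2 N' m2 c - qasM2 N' m2 c) * qaM1 N' m1 c / N'.qa m1 m2 c)
          * (y - N'.Qa m1 m2 c)
        + (N'.ga c)⁻¹ * (QtM1 N' m2 c - QtM1xM2 N' c)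
        + (N'.ga c)⁻¹ * (QtM2 N' m1 c - QtM2s N' m1 c
            - (QtM1xM2 N' c - QtM1xM2s N' c))
     else
      -((N'.gas c)⁻¹ * (QtM1 N' m2 c - QtM1xM2s N' c)))
    + (QtM1xM2 N' c - QtM1xM2s N' c)

/-- Uncentered efficient influence function of the covariant mediator effect. -/
def D0Cov (N' : Nuisance C M1 M2 μ1 μ2) : Bool → M1 → M2 → C → ℝ → ℝ :=
  fun a0 m1 m2 c y =>
    D0 N' a0 m1 m2 c y - D0A N' a0 m1 m2 c y - D0M1 N' a0 m1 m2 c y - D0M2 N' a0 m1 m2 c y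

/-- The iterated integral `∫_𝒞 ∬ f dμ1 dμ2 dμC` is absolutely convergent and all of its
Fubini interchanges are valid: `f` is integrable for the product measure. -/
def ProdIntegrable (μC : Measure C) (ν1 : Measure M1) (ν2 : Measure M2)
    (f : M1 → M2 → C → ℝ) : Prop :=
  Integrable (fun x : C × M1 × M2 => f x.2.1 x.2.2 x.1) (μC.prod (ν1.prod ν2))

/-- For every `c`, the iterated integral `∬ f(·,·,c) dμ1 dμ2` is absolutely convergent and
its Fubini interchange is valid. -/
def FubiniOK (ν1 : Measure M1) (ν2 : Measure M2) (f : M1 → M2 → C → ℝ) : Prop :=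
  ∀ c, Integrable (fun m : M1 × M2 => f m.1 m.2 c) (ν1.prod ν2)

/-- All iterated integrals defining `E_P[D]` are absolutely convergent with valid Fubini
interchanges. -/
def EPIntegrable (μC : Measure C) (N : Nuisance C M1 M2 μ1 μ2)
    (D : Bool → M1 → M2 → C → ℝ → ℝ) : Prop :=
  Integrable (fun x : C × M1 × M2 =>
      N.ga x.1 * (N.qa x.2.1 x.2.2 x.1 * D true x.2.1 x.2.2 x.1 (N.Qa x.2.1 x.2.2 x.1)))
    (μC.prod (μ1.prod μ2)) ∧
  Integrable (fun x : C × M1 × M2 =>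
      N.gas x.1 * (N.qas x.2.1 x.2.2 x.1 * D false x.2.1 x.2.2 x.1 (N.Qas x.2.1 x.2.2 x.1)))
    (μC.prod (μ1.prod μ2))

/-!
The decomposition already holds pointwise for the integrands. The difference of joint densities
`q_a - q_a⋆` splits into the change in dependence, `(q_a - q_{a,M1} q_{a,M2}) -
(q_a⋆ - q_{a⋆,M1} q_{a⋆,M2})`, and the change in the product of the marginals; the latter
telescopes through the hybrid `q_{a,M1} q_{a⋆,M2}` into the two indirect effects. By Fubini,
integrability over the product space makes the iterated integral additive.
-/

/-- The iterated integral `∫_𝒞 ∬ f dμ1 dμ2 dμC` through which every effect is defined. The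
argument order is that of `ProdIntegrable`, with the confounder last. -/
def iteratedIntegral (μC : Measure C) (ν1 : Measure M1) (ν2 : Measure M2)
    (f : M1 → M2 → C → ℝ) : ℝ :=
  ∫ c, ∫ m1, ∫ m2, f m1 m2 c ∂ν2 ∂ν1 ∂μC

/-- Marginal in the first mediator of a (not necessarily normalized) conditional density `q`;
it takes the value `0` where the section of `q` is not integrable. -/
def fstMarginal {α β γ : Type*} [MeasurableSpace β] (ν : Measure β) (q : α → β → γ → ℝ)
    (x : α) (c : γ) : ℝ :=
  ∫ y, q x y c ∂ν

/-- Marginal in the second mediator of a (not necessarily normalized) conditional density `q`;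
it takes the value `0` where the section of `q` is not integrable. -/
def sndMarginal {α β γ : Type*} [MeasurableSpace α] (ν : Measure α) (q : α → β → γ → ℝ)
    (y : β) (c : γ) : ℝ :=
  ∫ x, q x y c ∂ν

theorem ProdIntegrable.add {μC : Measure C} {f g : M1 → M2 → C → ℝ}
    (hf : ProdIntegrable μC μ1 μ2 f) (hg : ProdIntegrable μC μ1 μ2 g) :
    ProdIntegrable μC μ1 μ2 (f + g) :=
  Integrable.add hf hg

theorem ProdIntegrable.integral_prod_eq_iteratedIntegral {μC : Measure C} [SFinite μC]
    [SFinite μ1] [SFinite μ2] {f : M1 → M2 → C → ℝ} (hf : ProdIntegrable μC μ1 μ2 f) :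
    ∫ x, f x.2.1 x.2.2 x.1 ∂μC.prod (μ1.prod μ2) = iteratedIntegral μC μ1 μ2 f := by
  rw [integral_prod _ hf]
  refine integral_congr_ae ?_
  filter_upwards [hf.prod_right_ae] with c hc
  exact integral_prod _ hc

theorem iteratedIntegral_add {μC : Measure C} [SFinite μC] [SFinite μ1] [SFinite μ2]
    {f g : M1 → M2 → C → ℝ} (hf : ProdIntegrable μC μ1 μ2 f)
    (hg : ProdIntegrable μC μ1 μ2 g) :
    iteratedIntegral μC μ1 μ2 (f + g) =
      iteratedIntegral μC μ1 μ2 f + iteratedIntegral μC μ1 μ2 g := by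
  rw [← (hf.add hg).integral_prod_eq_iteratedIntegral, ← hf.integral_prod_eq_iteratedIntegral,
    ← hg.integral_prod_eq_iteratedIntegral]
  exact integral_add hf hg

theorem mul_sub_mul_eq_add_effects {R : Type*} [CommRing R] (Q Qs q qs r rs s ss : R) :
    Q * q - Qs * qs =
      (Q - Qs) * qs + Q * ((r - rs) * ss) + Q * (r * (s - ss)) +
        Q * (q - r * s - (qs - rs * ss)) := by
  have product_rule : r * s - rs * ss = (r - rs) * ss + r * (s - ss) := by ring
  calc Q * q - Qs * qs = (Q - Qs) * qs + Q * (q - qs) := by ring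
    _ = (Q - Qs) * qs + Q * (r * s - rs * ss) + Q * (q - r * s - (qs - rs * ss)) := by ring
    _ = _ := by rw [product_rule]; ring

theorem total_effect_decomposition_general {μC : Measure C} [SFinite μC] [SFinite μ1]
    [SFinite μ2] {Q Qs q qs : M1 → M2 → C → ℝ}
    (hA : ProdIntegrable μC μ1 μ2 fun m1 m2 c ↦ (Q m1 m2 c - Qs m1 m2 c) * qs m1 m2 c)
    (hM1 : ProdIntegrable μC μ1 μ2 fun m1 m2 c ↦
      Q m1 m2 c * ((fstMarginal μ2 q m1 c - fstMarginal μ2 qs m1 c) * sndMarginal μ1 qs m2 c))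
    (hM2 : ProdIntegrable μC μ1 μ2 fun m1 m2 c ↦
      Q m1 m2 c * (fstMarginal μ2 q m1 c * (sndMarginal μ1 q m2 c - sndMarginal μ1 qs m2 c)))
    (hCov : ProdIntegrable μC μ1 μ2 fun m1 m2 c ↦
      Q m1 m2 c * (q m1 m2 c - fstMarginal μ2 q m1 c * sndMarginal μ1 q m2 c -
        (qs m1 m2 c - fstMarginal μ2 qs m1 c * sndMarginal μ1 qs m2 c))) :
    iteratedIntegral μC μ1 μ2
        (fun m1 m2 c ↦ Q m1 m2 c * q m1 m2 c - Qs m1 m2 c * qs m1 m2 c) =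
      iteratedIntegral μC μ1 μ2 (fun m1 m2 c ↦ (Q m1 m2 c - Qs m1 m2 c) * qs m1 m2 c) +
      iteratedIntegral μC μ1 μ2 (fun m1 m2 c ↦
        Q m1 m2 c * ((fstMarginal μ2 q m1 c - fstMarginal μ2 qs m1 c) * sndMarginal μ1 qs m2 c)) +
      iteratedIntegral μC μ1 μ2 (fun m1 m2 c ↦
        Q m1 m2 c * (fstMarginal μ2 q m1 c * (sndMarginal μ1 q m2 c - sndMarginal μ1 qs m2 c))) +
      iteratedIntegral μC μ1 μ2 (fun m1 m2 c ↦
        Q m1 m2 c * (q m1 m2 c - fstMarginal μ2 q m1 c * sndMarginal μ1 q m2 c -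
          (qs m1 m2 c - fstMarginal μ2 qs m1 c * sndMarginal μ1 qs m2 c))) := by
  rw [← iteratedIntegral_add hA hM1, ← iteratedIntegral_add (hA.add hM1) hM2,
    ← iteratedIntegral_add ((hA.add hM1).add hM2) hCov]
  congr 1
  funext m1 m2 c
  exact mul_sub_mul_eq_add_effects ..

theorem total_effect_decomposition
    (μC : Measure C) [IsProbabilityMeasure μC] [SigmaFinite μ1] [SigmaFinite μ2]
    (N' : Nuisance C M1 M2 μ1 μ2)
    (hPsi : ProdIntegrable μC μ1 μ2
      (fun m1 m2 c => N'.Qa m1 m2 c * N'.qa m1 m2 c - N'.Qas m1 m2 c * N'.qas m1 m2 c))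
    (hPsiA : ProdIntegrable μC μ1 μ2
      (fun m1 m2 c => (N'.Qa m1 m2 c - N'.Qas m1 m2 c) * N'.qas m1 m2 c))
    (hPsiM1 : ProdIntegrable μC μ1 μ2
      (fun m1 m2 c => N'.Qa m1 m2 c * ((qaM1 N' m1 c - qasM1 N' m1 c) * qasM2 N' m2 c)))
    (hPsiM2 : ProdIntegrable μC μ1 μ2
      (fun m1 m2 c => N'.Qa m1 m2 c * (qaM1 N' m1 c * (qaM2 N' m2 c - qasM2 N' m2 c))))
    (hPsiCov : ProdIntegrable μC μ1 μ2
      (fun m1 m2 c => N'.Qa m1 m2 c * (N'.qa m1 m2 c - qaM1 N' m1 c * qaM2 N' m2 c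
        - (N'.qas m1 m2 c - qasM1 N' m1 c * qasM2 N' m2 c)))) :
    Psi μC N' = PsiA μC N' + PsiM1 μC N' + PsiM2 μC N' + PsiCov μC N' :=
  total_effect_decomposition_general hPsiA hPsiM1 hPsiM2 hPsiCov

end
end

section
/- If Qbar'_a = Qbar_a, Qbar'_a⋆ = Qbar_a⋆, q'_a = q_a and q'_a⋆ = q_a⋆ (the working outcome regressions and joint mediator densities agree with the truth), then E_P[D0(N')] = Ψ(N), regardless of the working propensity scores g'_a, g'_a⋆; that is, the efficient-influence-function-corrected total effect recovers the true total effect. -/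
open MeasureTheory

noncomputable section

variable {C M1 M2 : Type*} [MeasurableSpace C] [MeasurableSpace M1] [MeasurableSpace M2]
  {μ1 : Measure M1} {μ2 : Measure M2}

/-! Given `A = a` and `C = c`, the working `Q̃'_a(c)` is the true mean of `Y`, so the residual
`Y - Q̃'_a(c)` has conditional mean zero and its weight `1 / g'_a(c)` is irrelevant; likewise for
`a⋆`. What survives is the plug-in contrast `Q̃_a(c) - Q̃_a⋆(c)`, weighted by
`g_a(c) + g_a⋆(c) = 1`, and its mean over `C` is `Ψ`. The argument sees the working regressions and
densities only through the averages `Q̃'_a` and `Q̃'_a⋆`. -/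

section IteratedIntegrals

variable [SFinite μ1] [SFinite μ2]

theorem integral_integral_smul_add_smul {𝕜 E : Type*} [NormedField 𝕜] [NormedAddCommGroup E]
    [NormedSpace ℝ E] [NormedSpace 𝕜 E] [SMulCommClass ℝ 𝕜 E] {f h : M1 × M2 → E} {r s : 𝕜}
    (hf : Integrable f (μ1.prod μ2))
    (hsum : Integrable (fun z => r • f z + s • h z) (μ1.prod μ2)) :
    ∫ m1, ∫ m2, r • f (m1, m2) + s • h (m1, m2) ∂μ2 ∂μ1
      = r • (∫ m1, ∫ m2, f (m1, m2) ∂μ2 ∂μ1) + s • ∫ m1, ∫ m2, h (m1, m2) ∂μ2 ∂μ1 := by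
  rcases eq_or_ne s 0 with rfl | hs
  · simp only [zero_smul, add_zero, integral_smul]
  · have hsh : Integrable (s • h) (μ1.prod μ2) :=
      (integrable_add_iff_integrable_right (hf.smul r)).mp hsum
    have hh : Integrable h (μ1.prod μ2) := (integrable_smul_iff hs h).mp hsh
    simpa only [Pi.smul_apply, integral_smul]
      using integral_integral_add (hf.smul r) (hh.smul s)

-- Junk value: `∬ q = 1` does not make `q` integrable for the product measure, since an inner
-- integral that diverges counts as `0`.
theorem integral_integral_mul_residual_add {q Q : M1 → M2 → ℝ} {w δ : ℝ}
    (hq : ∫ m1, ∫ m2, q m1 m2 ∂μ2 ∂μ1 = 1)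
    (hQq : Integrable (fun m : M1 × M2 => Q m.1 m.2 * q m.1 m.2) (μ1.prod μ2))
    (hD : Integrable (fun m : M1 × M2 => q m.1 m.2 *
      (w * (Q m.1 m.2 - ∫ m1, ∫ m2, Q m1 m2 * q m1 m2 ∂μ2 ∂μ1) + δ)) (μ1.prod μ2)) :
    ∫ m1, ∫ m2, q m1 m2 *
      (w * (Q m1 m2 - ∫ m1, ∫ m2, Q m1 m2 * q m1 m2 ∂μ2 ∂μ1) + δ) ∂μ2 ∂μ1 = δ := by
  set Qt := ∫ m1, ∫ m2, Q m1 m2 * q m1 m2 ∂μ2 ∂μ1 with hQt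
  have expand (m1 : M1) (m2 : M2) : q m1 m2 * (w * (Q m1 m2 - Qt) + δ)
      = w • (Q m1 m2 * q m1 m2) + (δ - w * Qt) • q m1 m2 := by
    simp only [smul_eq_mul]; ring
  simp only [expand] at hD ⊢
  rw [integral_integral_smul_add_smul (h := fun m => q m.1 m.2) hQq hD, hq, ← hQt]
  simp only [smul_eq_mul]; ring

end IteratedIntegrals

section TotalEffect

variable [SFinite μ1] [SFinite μ2]

theorem integral_integral_qa_mul_D0_true {N N' : Nuisance C M1 M2 μ1 μ2} {c : C}
    (hA : QtA N' c = QtA N c)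
    (hQq : Integrable (fun m : M1 × M2 => N.Qa m.1 m.2 c * N.qa m.1 m.2 c) (μ1.prod μ2))
    (hD : Integrable (fun m : M1 × M2 =>
      N.qa m.1 m.2 c * D0 N' true m.1 m.2 c (N.Qa m.1 m.2 c)) (μ1.prod μ2)) :
    ∫ m1, ∫ m2, N.qa m1 m2 c * D0 N' true m1 m2 c (N.Qa m1 m2 c) ∂μ2 ∂μ1
      = QtA N' c - QtAs N' c := by
  have residual_form (m1 : M1) (m2 : M2) : D0 N' true m1 m2 c (N.Qa m1 m2 c)
      = (N'.ga c)⁻¹ * (N.Qa m1 m2 c - QtA N c) + (QtA N' c - QtAs N' c) := by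
    simp only [D0, if_true, hA]
  simp only [residual_form] at hD ⊢
  exact integral_integral_mul_residual_add (N.qa_norm c) hQq hD

theorem integral_integral_qas_mul_D0_false {N N' : Nuisance C M1 M2 μ1 μ2} {c : C}
    (hAs : QtAs N' c = QtAs N c)
    (hQq : Integrable (fun m : M1 × M2 => N.Qas m.1 m.2 c * N.qas m.1 m.2 c) (μ1.prod μ2))
    (hD : Integrable (fun m : M1 × M2 =>
      N.qas m.1 m.2 c * D0 N' false m.1 m.2 c (N.Qas m.1 m.2 c)) (μ1.prod μ2)) :
    ∫ m1, ∫ m2, N.qas m1 m2 c * D0 N' false m1 m2 c (N.Qas m1 m2 c) ∂μ2 ∂μ1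
      = QtA N' c - QtAs N' c := by
  have residual_form (m1 : M1) (m2 : M2) : D0 N' false m1 m2 c (N.Qas m1 m2 c)
      = -(N'.gas c)⁻¹ * (N.Qas m1 m2 c - QtAs N c) + (QtA N' c - QtAs N' c) := by
    simp only [D0, Bool.false_eq_true, if_false, hAs, neg_mul]
  simp only [residual_form] at hD ⊢
  exact integral_integral_mul_residual_add (N.qas_norm c) hQq hD

variable {μC : Measure C}

theorem Psi_eq_integral_QtA_sub_QtAs {N : Nuisance C M1 M2 μ1 μ2}
    (hFa : ∀ᵐ c ∂μC,
      Integrable (fun m : M1 × M2 => N.Qa m.1 m.2 c * N.qa m.1 m.2 c) (μ1.prod μ2))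
    (hFas : ∀ᵐ c ∂μC,
      Integrable (fun m : M1 × M2 => N.Qas m.1 m.2 c * N.qas m.1 m.2 c) (μ1.prod μ2)) :
    Psi μC N = ∫ c, (QtA N c - QtAs N c) ∂μC := by
  refine integral_congr_ae ?_
  filter_upwards [hFa, hFas] with c hca hcas
  exact integral_integral_sub hca hcas

variable [SFinite μC] {N : Nuisance C M1 M2 μ1 μ2} {D : Bool → M1 → M2 → C → ℝ → ℝ}

theorem EPIntegrable.ae_integrable_true (hD : EPIntegrable μC N D) :
    ∀ᵐ c ∂μC, Integrable (fun m : M1 × M2 =>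
      N.qa m.1 m.2 c * D true m.1 m.2 c (N.Qa m.1 m.2 c)) (μ1.prod μ2) := by
  filter_upwards [hD.1.prod_right_ae] with c hc
  exact (integrable_const_mul_iff (N.ga_pos c).ne'.isUnit _).mp hc

theorem EPIntegrable.ae_integrable_false (hD : EPIntegrable μC N D) :
    ∀ᵐ c ∂μC, Integrable (fun m : M1 × M2 =>
      N.qas m.1 m.2 c * D false m.1 m.2 c (N.Qas m.1 m.2 c)) (μ1.prod μ2) := by
  filter_upwards [hD.2.prod_right_ae] with c hc
  exact (integrable_const_mul_iff (N.gas_pos c).ne'.isUnit _).mp hc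

end TotalEffect

theorem total_effect_robust_outcome_mediator_general
    (μC : Measure C) [SFinite μC] [SFinite μ1] [SFinite μ2]
    (N N' : Nuisance C M1 M2 μ1 μ2)
    (hA : QtA N' =ᵐ[μC] QtA N)
    (hAs : QtAs N' =ᵐ[μC] QtAs N)
    (hEP : EPIntegrable μC N (D0 N'))
    (hFa : ∀ᵐ c ∂μC,
      Integrable (fun m : M1 × M2 => N.Qa m.1 m.2 c * N.qa m.1 m.2 c) (μ1.prod μ2))
    (hFas : ∀ᵐ c ∂μC,
      Integrable (fun m : M1 × M2 => N.Qas m.1 m.2 c * N.qas m.1 m.2 c) (μ1.prod μ2)) :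
    EP μC N (D0 N') = Psi μC N := by
  rw [Psi_eq_integral_QtA_sub_QtAs hFa hFas]
  refine integral_congr_ae ?_
  filter_upwards [hA, hAs, hFa, hFas, hEP.ae_integrable_true, hEP.ae_integrable_false]
    with c hcA hcAs hca hcas hDa hDas
  rw [integral_integral_qa_mul_D0_true hcA hca hDa,
    integral_integral_qas_mul_D0_false hcAs hcas hDas, ← add_mul, N.g_sum, one_mul, hcA, hcAs]

theorem total_effect_robust_outcome_mediator
    (μC : Measure C) [IsProbabilityMeasure μC] [SigmaFinite μ1] [SigmaFinite μ2]
    (N N' : Nuisance C M1 M2 μ1 μ2)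
    (hQa : N'.Qa = N.Qa)
    (hQas : N'.Qas = N.Qas)
    (hqa : N'.qa = N.qa)
    (hqas : N'.qas = N.qas)
    (hEP : EPIntegrable μC N (D0 N'))
    (hPsiN : ProdIntegrable μC μ1 μ2
      (fun m1 m2 c => N.Qa m1 m2 c * N.qa m1 m2 c - N.Qas m1 m2 c * N.qas m1 m2 c))
    (hF1 : FubiniOK μ1 μ2 (fun m1 m2 c => N'.Qa m1 m2 c * N'.qa m1 m2 c))
    (hF2 : FubiniOK μ1 μ2 (fun m1 m2 c => N'.Qas m1 m2 c * N'.qas m1 m2 c)) :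
    EP μC N (D0 N') = Psi μC N := by
  have hA : QtA N' = QtA N := by unfold QtA; rw [hQa, hqa]
  have hAs : QtAs N' = QtAs N := by unfold QtAs; rw [hQas, hqas]
  rw [hQa, hqa] at hF1
  rw [hQas, hqas] at hF2
  exact total_effect_robust_outcome_mediator_general μC N N' (.of_eq hA) (.of_eq hAs) hEP
    (.of_forall hF1) (.of_forall hF2)

end
end

section
/- If Qbar'_a = Qbar_a, Qbar'_a⋆ = Qbar_a⋆ and g'_a⋆ = g_a⋆ (the working outcome regressions and the working propensity for a⋆ agree with the truth), then E_P[D0_A(N')] = Ψ_A(N), regardless of the working joint mediator densities q'_a, q'_a⋆ and of g'_a; that is, the efficient-influence-function-corrected interventional direct effect recovers the true interventional direct effect. -/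
open MeasureTheory

noncomputable section

variable {C M1 M2 : Type*} [MeasurableSpace C] [MeasurableSpace M1] [MeasurableSpace M2]
  {μ1 : Measure M1} {μ2 : Measure M2}

/-!
When the outcome regressions are correct, every residual `y - Qbar` has conditional mean zero, so
the misspecified weight in the `a`-arm is harmless. Given `c`, the `a`-arm then contributes
`g_a k` and the `a⋆`-arm contributes `∬ (Qbar_a - Qbar_a⋆) q_a⋆ - k + g_a⋆ k`, where `k` is the
possibly misspecified centering `Q̃'_{a,⋆} - Q̃'_{a⋆,⋆}`; since `g_a + g_a⋆ = 1`, it cancels.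
-/

/-- The uncentered influence function `D0A` with its `a`-arm weight
`g'_a⁻¹ q'_a⋆ / q'_a` replaced by an arbitrary `w` and its centering `Q̃'_{a,⋆} - Q̃'_{a⋆,⋆}` by an
arbitrary `k`: no other part of `D0A N'` depends on the components of the working tuple that may be
misspecified. The outcome regressions and `g_a⋆` are those of `N`. -/
def directEffectScore (N : Nuisance C M1 M2 μ1 μ2) (w : M1 → M2 → C → ℝ) (k : C → ℝ) :
    Bool → M1 → M2 → C → ℝ → ℝ :=
  fun a0 m1 m2 c y =>
    (if a0 then w m1 m2 c * (y - N.Qa m1 m2 c)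
     else
      -((N.gas c)⁻¹ * (y - N.Qas m1 m2 c))
        + (N.gas c)⁻¹ * (N.Qa m1 m2 c - N.Qas m1 m2 c - k c))
    + k c

lemma D0A_eq_directEffectScore {N N' : Nuisance C M1 M2 μ1 μ2}
    (hQa : N'.Qa = N.Qa) (hQas : N'.Qas = N.Qas) (hgas : N'.gas = N.gas) :
    D0A N' = directEffectScore N
      (fun m1 m2 c => (N'.ga c)⁻¹ * (N'.qas m1 m2 c / N'.qa m1 m2 c))
      (fun c => QtAstar N' c - QtAs N' c) := by
  funext a0 m1 m2 c y
  simp only [D0A, directEffectScore, hQa, hQas, hgas]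

section DirectEffectScore

variable (N : Nuisance C M1 M2 μ1 μ2) (w : M1 → M2 → C → ℝ) (k : C → ℝ)

lemma directEffectScore_true_Qa (m1 : M1) (m2 : M2) (c : C) :
    directEffectScore N w k true m1 m2 c (N.Qa m1 m2 c) = k c := by
  simp [directEffectScore]

lemma gas_mul_qas_mul_directEffectScore_false_Qas (m1 : M1) (m2 : M2) (c : C) :
    N.gas c * (N.qas m1 m2 c * directEffectScore N w k false m1 m2 c (N.Qas m1 m2 c)) =
      (N.Qa m1 m2 c - N.Qas m1 m2 c) * N.qas m1 m2 c - N.ga c * k c * N.qas m1 m2 c := by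
  have hgas : N.gas c ≠ 0 := (N.gas_pos c).ne'
  have hga : N.ga c = 1 - N.gas c := eq_sub_of_add_eq (N.g_sum c)
  simp only [directEffectScore, Bool.false_eq_true, if_false, sub_self, mul_zero, neg_zero,
    zero_add, hga]
  field_simp
  ring

lemma integral_qa_mul_directEffectScore_true (c : C) :
    ∫ m1, ∫ m2, N.qa m1 m2 c * directEffectScore N w k true m1 m2 c (N.Qa m1 m2 c) ∂μ2 ∂μ1 =
      k c := by
  simp only [directEffectScore_true_Qa, integral_mul_const, N.qa_norm, one_mul]

lemma gas_mul_integral_qas_mul_directEffectScore_false [SFinite μ1] [SFinite μ2] {c : C}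
    (hD : Integrable (fun m : M1 × M2 => N.gas c * (N.qas m.1 m.2 c *
      directEffectScore N w k false m.1 m.2 c (N.Qas m.1 m.2 c))) (μ1.prod μ2))
    (hΔ : Integrable (fun m : M1 × M2 =>
      (N.Qa m.1 m.2 c - N.Qas m.1 m.2 c) * N.qas m.1 m.2 c) (μ1.prod μ2)) :
    N.gas c * ∫ m1, ∫ m2, N.qas m1 m2 c *
        directEffectScore N w k false m1 m2 c (N.Qas m1 m2 c) ∂μ2 ∂μ1 =
      (∫ m1, ∫ m2, (N.Qa m1 m2 c - N.Qas m1 m2 c) * N.qas m1 m2 c ∂μ2 ∂μ1) - N.ga c * k c := by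
  simp only [gas_mul_qas_mul_directEffectScore_false_Qas] at hD
  -- `q_a⋆(·, ·, c)` itself need not be integrable when `k c = 0`: `qas_norm` only concerns the
  -- iterated Bochner integral.
  have hqas : Integrable (fun m : M1 × M2 => N.ga c * k c * N.qas m.1 m.2 c) (μ1.prod μ2) := by
    simpa only [Pi.sub_def, sub_sub_cancel] using hΔ.sub hD
  calc
    _ = ∫ m1, ∫ m2, (N.Qa m1 m2 c - N.Qas m1 m2 c) * N.qas m1 m2 c
          - N.ga c * k c * N.qas m1 m2 c ∂μ2 ∂μ1 := by
      simp only [← integral_const_mul, gas_mul_qas_mul_directEffectScore_false_Qas]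
    _ = (∫ m1, ∫ m2, (N.Qa m1 m2 c - N.Qas m1 m2 c) * N.qas m1 m2 c ∂μ2 ∂μ1)
          - ∫ m1, ∫ m2, N.ga c * k c * N.qas m1 m2 c ∂μ2 ∂μ1 := integral_integral_sub hΔ hqas
    _ = _ := by simp only [integral_const_mul, N.qas_norm, mul_one]

theorem direct_effect_robust_outcome_and_gas_general (μC : Measure C) [SFinite μC]
    [SFinite μ1] [SFinite μ2]
    (hEP : EPIntegrable μC N (directEffectScore N w k))
    (hPsi : ProdIntegrable μC μ1 μ2
      (fun m1 m2 c => (N.Qa m1 m2 c - N.Qas m1 m2 c) * N.qas m1 m2 c)) :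
    EP μC N (directEffectScore N w k) = PsiA μC N := by
  refine integral_congr_ae ?_
  filter_upwards [hEP.2.prod_right_ae, hPsi.prod_right_ae] with c hD hΔ
  rw [integral_qa_mul_directEffectScore_true,
    gas_mul_integral_qas_mul_directEffectScore_false N w k hD hΔ, add_sub_cancel]

end DirectEffectScore

theorem direct_effect_robust_outcome_and_gas
    (μC : Measure C) [IsProbabilityMeasure μC] [SigmaFinite μ1] [SigmaFinite μ2]
    (N N' : Nuisance C M1 M2 μ1 μ2)
    (hQa : N'.Qa = N.Qa)
    (hQas : N'.Qas = N.Qas)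
    (hgas : N'.gas = N.gas)
    (hEP : EPIntegrable μC N (D0A N'))
    (hPsiN : ProdIntegrable μC μ1 μ2
      (fun m1 m2 c => (N.Qa m1 m2 c - N.Qas m1 m2 c) * N.qas m1 m2 c))
    (hF1 : FubiniOK μ1 μ2 (fun m1 m2 c => N'.Qa m1 m2 c * N'.qas m1 m2 c))
    (hF2 : FubiniOK μ1 μ2 (fun m1 m2 c => N'.Qas m1 m2 c * N'.qas m1 m2 c)) :
    EP μC N (D0A N') = PsiA μC N := by
  rw [D0A_eq_directEffectScore hQa hQas hgas] at hEP ⊢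
  exact direct_effect_robust_outcome_and_gas_general N _ _ μC hEP hPsiN

end
end

section
/- If Qbar'_a = Qbar_a, Qbar'_a⋆ = Qbar_a⋆, q'_a = q_a and q'_a⋆ = q_a⋆ (the working outcome regressions and joint mediator densities agree with the truth), then E_P[D0_A(N')] = Ψ_A(N), regardless of the working propensity scores g'_a, g'_a⋆; that is, the efficient-influence-function-corrected interventional direct effect recovers the true interventional direct effect. -/
open MeasureTheory

noncomputable section

variable {C M1 M2 : Type*} [MeasurableSpace C] [MeasurableSpace M1] [MeasurableSpace M2]
  {μ1 : Measure M1} {μ2 : Measure M2}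

/-!
At a correct outcome regression the inverse-propensity residual terms have mean zero. What
remains of the influence function is constant in the mediators in arm `a`, where it equals
`Δ(c) = Q̃_{a,⋆}(c) - Q̃_{a⋆,⋆}(c)`. In arm `a⋆` it is `Δ(c)` plus `g'_a⋆(c)⁻¹` times the contrast
`Qbar_a - Qbar_a⋆` centred at its `q_a⋆`-mean `Δ(c)`, so the working propensity multiplies a term
of mean zero. Both arms thus have conditional mean `Δ(c)`; the true propensities sum to one, and
averaging over `c` yields `Ψ_A`.
-/

-- `hq` only normalizes the iterated integral, which does not entail joint integrability of `q`:
-- a non-integrable inner section contributes the junk value `0`.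
theorem integral_integral_add_density_mul_const {X Y : Type*} [MeasurableSpace X]
    [MeasurableSpace Y] {μ : Measure X} {ν : Measure Y} [SFinite μ] [SFinite ν]
    {f q : X → Y → ℝ} {k : ℝ} (hq : ∫ x, ∫ y, q x y ∂ν ∂μ = 1)
    (hf : Integrable (fun z : X × Y => f z.1 z.2) (μ.prod ν))
    (hfq : Integrable (fun z : X × Y => f z.1 z.2 + q z.1 z.2 * k) (μ.prod ν)) :
    ∫ x, ∫ y, (f x y + q x y * k) ∂ν ∂μ = (∫ x, ∫ y, f x y ∂ν ∂μ) + k := by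
  have hqk : Integrable (fun z : X × Y => q z.1 z.2 * k) (μ.prod ν) := by
    simpa only [Pi.sub_def, add_sub_cancel_left] using hfq.sub hf
  calc ∫ x, ∫ y, (f x y + q x y * k) ∂ν ∂μ
      = (∫ x, ∫ y, f x y ∂ν ∂μ) + ∫ x, ∫ y, q x y * k ∂ν ∂μ := integral_integral_add hf hqk
    _ = (∫ x, ∫ y, f x y ∂ν ∂μ) + k := by simp only [integral_mul_const, hq, one_mul]

/-- The interventional direct effect conditional on the confounder value `c`, written
`Q̃_{a,⋆}(c) - Q̃_{a⋆,⋆}(c)`; its mean over `c` is `Ψ_A`. -/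
def conditionalDirectEffect (N : Nuisance C M1 M2 μ1 μ2) (c : C) : ℝ :=
  QtAstar N c - QtAs N c

theorem integral_integral_sub_mul_qas [SFinite μ1] [SFinite μ2]
    (N : Nuisance C M1 M2 μ1 μ2) {c : C}
    (hQa : Integrable (fun m : M1 × M2 => N.Qa m.1 m.2 c * N.qas m.1 m.2 c) (μ1.prod μ2))
    (hQas : Integrable (fun m : M1 × M2 => N.Qas m.1 m.2 c * N.qas m.1 m.2 c) (μ1.prod μ2)) :
    ∫ m1, ∫ m2, (N.Qa m1 m2 c - N.Qas m1 m2 c) * N.qas m1 m2 c ∂μ2 ∂μ1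
      = conditionalDirectEffect N c := by
  simp only [sub_mul]
  exact integral_integral_sub hQa hQas

theorem PsiA_eq_integral_conditionalDirectEffect [SFinite μ1] [SFinite μ2]
    (μC : Measure C) (N : Nuisance C M1 M2 μ1 μ2)
    (hQa : FubiniOK μ1 μ2 fun m1 m2 c => N.Qa m1 m2 c * N.qas m1 m2 c)
    (hQas : FubiniOK μ1 μ2 fun m1 m2 c => N.Qas m1 m2 c * N.qas m1 m2 c) :
    PsiA μC N = ∫ c, conditionalDirectEffect N c ∂μC :=
  integral_congr_ae <| .of_forall fun c =>
    integral_integral_sub_mul_qas N (hQa c) (hQas c)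

theorem D0A_true_Qa (N : Nuisance C M1 M2 μ1 μ2) (m1 : M1) (m2 : M2) (c : C) :
    D0A N true m1 m2 c (N.Qa m1 m2 c) = conditionalDirectEffect N c := by
  simp [D0A, conditionalDirectEffect]

theorem D0A_false_Qas (N : Nuisance C M1 M2 μ1 μ2) (m1 : M1) (m2 : M2) (c : C) :
    D0A N false m1 m2 c (N.Qas m1 m2 c)
      = (N.gas c)⁻¹ * (N.Qa m1 m2 c - N.Qas m1 m2 c)
        + (1 - (N.gas c)⁻¹) * conditionalDirectEffect N c := by
  simp only [D0A, conditionalDirectEffect, Bool.false_eq_true, if_false]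
  ring

theorem integral_integral_density_mul_D0A_true (N : Nuisance C M1 M2 μ1 μ2) {c : C}
    {q : M1 → M2 → ℝ} (hq : ∫ m1, ∫ m2, q m1 m2 ∂μ2 ∂μ1 = 1) :
    ∫ m1, ∫ m2, q m1 m2 * D0A N true m1 m2 c (N.Qa m1 m2 c) ∂μ2 ∂μ1
      = conditionalDirectEffect N c := by
  simp only [D0A_true_Qa, integral_mul_const, hq, one_mul]

theorem integral_integral_qas_mul_D0A_false [SFinite μ1] [SFinite μ2]
    (N : Nuisance C M1 M2 μ1 μ2) {c : C}
    (hQa : Integrable (fun m : M1 × M2 => N.Qa m.1 m.2 c * N.qas m.1 m.2 c) (μ1.prod μ2))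
    (hQas : Integrable (fun m : M1 × M2 => N.Qas m.1 m.2 c * N.qas m.1 m.2 c) (μ1.prod μ2))
    (hD : Integrable (fun m : M1 × M2 =>
      N.qas m.1 m.2 c * D0A N false m.1 m.2 c (N.Qas m.1 m.2 c)) (μ1.prod μ2)) :
    ∫ m1, ∫ m2, N.qas m1 m2 c * D0A N false m1 m2 c (N.Qas m1 m2 c) ∂μ2 ∂μ1
      = conditionalDirectEffect N c := by
  have hsplit : ∀ m1 m2, N.qas m1 m2 c * D0A N false m1 m2 c (N.Qas m1 m2 c)
      = (N.gas c)⁻¹ * ((N.Qa m1 m2 c - N.Qas m1 m2 c) * N.qas m1 m2 c)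
        + N.qas m1 m2 c * ((1 - (N.gas c)⁻¹) * conditionalDirectEffect N c) := by
    intro m1 m2
    rw [D0A_false_Qas]
    ring
  have hcontrast : Integrable (fun m : M1 × M2 =>
      (N.Qa m.1 m.2 c - N.Qas m.1 m.2 c) * N.qas m.1 m.2 c) (μ1.prod μ2) := by
    simpa only [Pi.sub_def, sub_mul] using hQa.sub hQas
  simp only [hsplit] at hD ⊢
  rw [integral_integral_add_density_mul_const (N.qas_norm c) (hcontrast.const_mul _) hD]
  simp only [integral_const_mul, integral_integral_sub_mul_qas N hQa hQas]
  ring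

theorem EPIntegrable.ae_integrable_qas_mul [SFinite μ1] [SFinite μ2] {μC : Measure C}
    [SFinite μC] {N : Nuisance C M1 M2 μ1 μ2} {D : Bool → M1 → M2 → C → ℝ → ℝ}
    (hD : EPIntegrable μC N D) :
    ∀ᵐ c ∂μC, Integrable (fun m : M1 × M2 =>
      N.qas m.1 m.2 c * D false m.1 m.2 c (N.Qas m.1 m.2 c)) (μ1.prod μ2) := by
  filter_upwards [hD.2.prod_right_ae] with c hc
  exact (integrable_const_mul_iff (N.gas_pos c).ne'.isUnit _).1 hc

theorem direct_effect_robust_outcome_mediator_general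
    (μC : Measure C) [SFinite μC] [SFinite μ1] [SFinite μ2]
    (N N' : Nuisance C M1 M2 μ1 μ2)
    (hQa : N'.Qa = N.Qa)
    (hQas : N'.Qas = N.Qas)
    (hqas : N'.qas = N.qas)
    (hEP : EPIntegrable μC N (D0A N'))
    (hF1 : FubiniOK μ1 μ2 (fun m1 m2 c => N'.Qa m1 m2 c * N'.qas m1 m2 c))
    (hF2 : FubiniOK μ1 μ2 (fun m1 m2 c => N'.Qas m1 m2 c * N'.qas m1 m2 c)) :
    EP μC N (D0A N') = PsiA μC N := by
  have hPsiA : PsiA μC N' = PsiA μC N := by simp only [PsiA, hQa, hQas, hqas]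
  rw [← hPsiA, PsiA_eq_integral_conditionalDirectEffect μC N' hF1 hF2]
  refine integral_congr_ae ?_
  filter_upwards [hEP.ae_integrable_qas_mul] with c hD
  rw [← hQas, ← hqas] at hD
  rw [← hQa, ← hQas, ← hqas, integral_integral_density_mul_D0A_true N' (N.qa_norm c),
    integral_integral_qas_mul_D0A_false N' (hF1 c) (hF2 c) hD, ← add_mul, N.g_sum, one_mul]

theorem direct_effect_robust_outcome_mediator
    (μC : Measure C) [IsProbabilityMeasure μC] [SigmaFinite μ1] [SigmaFinite μ2]
    (N N' : Nuisance C M1 M2 μ1 μ2)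
    (hQa : N'.Qa = N.Qa)
    (hQas : N'.Qas = N.Qas)
    (hqa : N'.qa = N.qa)
    (hqas : N'.qas = N.qas)
    (hEP : EPIntegrable μC N (D0A N'))
    (hPsiN : ProdIntegrable μC μ1 μ2
      (fun m1 m2 c => (N.Qa m1 m2 c - N.Qas m1 m2 c) * N.qas m1 m2 c))
    (hF1 : FubiniOK μ1 μ2 (fun m1 m2 c => N'.Qa m1 m2 c * N'.qas m1 m2 c))
    (hF2 : FubiniOK μ1 μ2 (fun m1 m2 c => N'.Qas m1 m2 c * N'.qas m1 m2 c)) :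
    EP μC N (D0A N') = PsiA μC N :=
  direct_effect_robust_outcome_mediator_general μC N N' hQa hQas hqas hEP hF1 hF2

end
end

section
/- The t indirect-effect integrals telescope: Σ_{s=1}^t ψ_{t,M_s} = ∫_𝒞 ∫ Qbar_a(m_1,…,m_t,c) { ∏_{u=1}^t p_u(m_u,c) − ∏_{v=1}^t r_v(m_v,c) } dμ_1(m_1)⋯dμ_t(m_t) dμC(c); that is, the sum of the interventional indirect effects through M_1,…,M_t equals the contrast of the outcome regression marginalized over the product of the treatment-level-a marginal mediator densities versus the product of the treatment-level-a⋆ marginal mediator densities. -/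
open MeasureTheory

theorem prod_sub_prod_eq_sum_Iio_Ioi {ι R : Type*} [Fintype ι] [LinearOrder ι]
    [LocallyFiniteOrderBot ι] [LocallyFiniteOrderTop ι] [CommRing R] (a b : ι → R) :
    ∏ i, a i - ∏ i, b i
      = ∑ i, (a i - b i) * ((∏ j ∈ Finset.Iio i, a j) * ∏ j ∈ Finset.Ioi i, b j) := by
  -- Expand `∏ (b + (a - b))`, grouping the terms by the largest index that contributes `a - b`.
  have expansion := Finset.prod_add_ordered Finset.univ b (fun i ↦ a i - b i)
  simp only [add_sub_cancel, Finset.filter_gt_eq_Iio, Finset.filter_lt_eq_Ioi, mul_assoc]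
    at expansion
  exact sub_eq_of_eq_add' expansion

theorem integral_integral_finsetSum {ι α β E : Type*} [MeasurableSpace α] [MeasurableSpace β]
    [NormedAddCommGroup E] [NormedSpace ℝ E] {μ : Measure α} {ν : Measure β}
    [SFinite μ] [SFinite ν] (s : Finset ι) {f : ι → α → β → E}
    (hf : ∀ i ∈ s, Integrable (Function.uncurry (f i)) (μ.prod ν)) :
    ∫ x, ∫ y, ∑ i ∈ s, f i x y ∂ν ∂μ = ∑ i ∈ s, ∫ x, ∫ y, f i x y ∂ν ∂μ :=
  calc ∫ x, ∫ y, ∑ i ∈ s, f i x y ∂ν ∂μ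
      = ∫ z, ∑ i ∈ s, f i z.1 z.2 ∂μ.prod ν := integral_integral (integrable_finsetSum s hf)
    _ = ∑ i ∈ s, ∫ z, f i z.1 z.2 ∂μ.prod ν := integral_finsetSum s hf
    _ = ∑ i ∈ s, ∫ x, ∫ y, f i x y ∂ν ∂μ :=
      Finset.sum_congr rfl fun i hi ↦ (integral_integral (hf i hi)).symm

theorem indirect_effects_telescope_general {ι C : Type*} [Fintype ι] [LinearOrder ι]
    [LocallyFiniteOrderBot ι] [LocallyFiniteOrderTop ι]
    [MeasurableSpace C] (μC : Measure C) [SFinite μC]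
    (M : ι → Type*) [∀ i, MeasurableSpace (M i)] (ν : Measure (∀ i, M i)) [SFinite ν]
    (p r : ∀ i, M i → C → ℝ) (Qb : (∀ i, M i) → C → ℝ)
    (hInt : ∀ s, Integrable (fun x : C × (∀ i, M i) ↦
        Qb x.2 x.1 * ((p s (x.2 s) x.1 - r s (x.2 s) x.1)
          * ((∏ u ∈ Finset.Iio s, p u (x.2 u) x.1) * ∏ v ∈ Finset.Ioi s, r v (x.2 v) x.1)))
        (μC.prod ν)) :
    (∑ s, ∫ c, (∫ m, Qb m c * ((p s (m s) c - r s (m s) c)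
        * ((∏ u ∈ Finset.Iio s, p u (m u) c) * ∏ v ∈ Finset.Ioi s, r v (m v) c)) ∂ν) ∂μC)
      = ∫ c, (∫ m, Qb m c * ((∏ u, p u (m u) c) - ∏ v, r v (m v) c) ∂ν) ∂μC := by
  simp_rw [prod_sub_prod_eq_sum_Iio_Ioi, Finset.mul_sum]
  exact (integral_integral_finsetSum Finset.univ fun s _ ↦ hInt s).symm

/-- **Telescoping of interventional indirect effects with `t` mediators.** The sum of the
interventional indirect effects `ψ_{t,M_s}`, `s = 1,…,t`, equals the contrast of the outcome
regression marginalized over the product of the treatment-level-`a` marginal mediator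
densities `p_u` versus the product of the treatment-level-`a⋆` marginal mediator densities
`r_v`.  Mediator `u` takes values in the measurable space `M u` with σ-finite measure `μ u`;
for `s : Fin t`, the sets `Finset.Iio s` and `Finset.Ioi s` encode `{1,…,s-1}` and
`{s+1,…,t}` respectively. -/
theorem indirect_effects_telescope
    (t : ℕ) (ht : 1 ≤ t)
    {C : Type*} [MeasurableSpace C] (μC : Measure C) [IsProbabilityMeasure μC]
    (M : Fin t → Type*) [∀ i, MeasurableSpace (M i)]
    (μ : ∀ i, Measure (M i)) [∀ i, SigmaFinite (μ i)]
    (p r : ∀ i, M i → C → ℝ) (Qb : (∀ i, M i) → C → ℝ)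
    (hp_meas : ∀ i, Measurable (fun x : M i × C => p i x.1 x.2))
    (hr_meas : ∀ i, Measurable (fun x : M i × C => r i x.1 x.2))
    (hQb_meas : Measurable (fun x : (∀ i, M i) × C => Qb x.1 x.2))
    (hp_nonneg : ∀ i mi c, 0 ≤ p i mi c) (hr_nonneg : ∀ i mi c, 0 ≤ r i mi c)
    (hp_norm : ∀ i c, (∫ mi, p i mi c ∂(μ i)) = 1)
    (hr_norm : ∀ i c, (∫ mi, r i mi c ∂(μ i)) = 1)
    (hQb_nonneg : ∀ m c, 0 ≤ Qb m c) (hQb_le_one : ∀ m c, Qb m c ≤ 1)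
    (hInt : ∀ s : Fin t, Integrable (fun x : C × (∀ i, M i) =>
        Qb x.2 x.1 * ((p s (x.2 s) x.1 - r s (x.2 s) x.1)
          * ((∏ u ∈ Finset.Iio s, p u (x.2 u) x.1) * ∏ v ∈ Finset.Ioi s, r v (x.2 v) x.1)))
        (μC.prod (Measure.pi μ)))
    (hInt' : Integrable (fun x : C × (∀ i, M i) =>
        Qb x.2 x.1 * ((∏ u, p u (x.2 u) x.1) - ∏ v, r v (x.2 v) x.1))
        (μC.prod (Measure.pi μ))) :
    (∑ s : Fin t, ∫ c, (∫ m, Qb m c * ((p s (m s) c - r s (m s) c)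
        * ((∏ u ∈ Finset.Iio s, p u (m u) c) * ∏ v ∈ Finset.Ioi s, r v (m v) c))
          ∂(Measure.pi μ)) ∂μC)
      = ∫ c, (∫ m, Qb m c * ((∏ u, p u (m u) c) - ∏ v, r v (m v) c) ∂(Measure.pi μ)) ∂μC :=
  indirect_effects_telescope_general μC M (Measure.pi μ) p r Qb hInt
end
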